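/- arXiv:1902.04071 — 2 statements merged into one kernel-verified Lean document; each statement's English description precedes it below -/
import Mathlib

section
/- The algebra R_n with basis {e₁,…,e_n, f₁,…,f_k, y₁,…,y_{k+1}} and non-zero products [eᵢ,f₁] = e_{i+1} (1 ≤ i ≤ n-k), [e₁,fᵢ] = e_{n-k+i} (2 ≤ i ≤ k), [fᵢ,yᵢ] = fᵢ = -[yᵢ,fᵢ] (1 ≤ i ≤ k), [eᵢ,y_{k+1}] = eᵢ (1 ≤ i ≤ n), [eᵢ,y₁] = (i-1)eᵢ (1 ≤ i ≤ n-k+1), [e_{n-k+i},yᵢ] = e_{n-k+i} (2 ≤ i ≤ k), is a solvable Leibniz algebra. -/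
noncomputable section

open Finset

/-- Underlying space of `R_n`: basis `e₁,…,e_n`, `f₁,…,f_k`, `y₁,…,y_{k+1}`. -/
abbrev LR (n k : ℕ) := (Fin n ⊕ (Fin k ⊕ Fin (k + 1))) → ℂ

/-- `1`-indexed basis vector `eᵢ` (zero out of range). -/
def Eb (n k : ℕ) (i : ℕ) : LR n k := fun s =>
  match s with
  | .inl a => if (a : ℕ) + 1 = i then 1 else 0
  | _ => 0

/-- `1`-indexed basis vector `fᵢ` (zero out of range). -/
def Fb (n k : ℕ) (i : ℕ) : LR n k := fun s =>
  match s with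
  | .inr (.inl a) => if (a : ℕ) + 1 = i then 1 else 0
  | _ => 0

/-- `1`-indexed basis vector `yᵢ` (zero out of range). -/
def Yb (n k : ℕ) (i : ℕ) : LR n k := fun s =>
  match s with
  | .inr (.inr a) => if (a : ℕ) + 1 = i then 1 else 0
  | _ => 0

/-- Structure constants of `R_n`:
`[eᵢ,f₁] = e_{i+1}` (1 ≤ i ≤ n-k), `[e₁,fᵢ] = e_{n-k+i}` (2 ≤ i ≤ k),
`[fᵢ,yᵢ] = fᵢ = -[yᵢ,fᵢ]` (1 ≤ i ≤ k), `[eᵢ,y_{k+1}] = eᵢ` (1 ≤ i ≤ n),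
`[eᵢ,y₁] = (i-1)eᵢ` (1 ≤ i ≤ n-k+1), `[e_{n-k+i},yᵢ] = e_{n-k+i}` (2 ≤ i ≤ k). -/
def cR (n k : ℕ) :
    (Fin n ⊕ (Fin k ⊕ Fin (k + 1))) → (Fin n ⊕ (Fin k ⊕ Fin (k + 1))) → LR n k
  | .inl a, .inr (.inl b) =>
      (if (b : ℕ) = 0 ∧ (a : ℕ) + 1 ≤ n - k then Eb n k ((a : ℕ) + 2) else 0)
      + (if (a : ℕ) = 0 ∧ 1 ≤ (b : ℕ) then Eb n k (n - k + (b : ℕ) + 1) else 0)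
  | .inr (.inl a), .inr (.inr b) =>
      if (a : ℕ) = (b : ℕ) then Fb n k ((a : ℕ) + 1) else 0
  | .inr (.inr a), .inr (.inl b) =>
      if (a : ℕ) = (b : ℕ) then -Fb n k ((b : ℕ) + 1) else 0
  | .inl a, .inr (.inr b) =>
      (if (b : ℕ) = k then Eb n k ((a : ℕ) + 1) else 0)
      + (if (b : ℕ) = 0 ∧ (a : ℕ) + 1 ≤ n - k + 1 then ((a : ℕ) : ℂ) • Eb n k ((a : ℕ) + 1) else 0)
      + (if 1 ≤ (b : ℕ) ∧ (b : ℕ) + 1 ≤ k ∧ (a : ℕ) + 1 = n - k + (b : ℕ) + 1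
          then Eb n k ((a : ℕ) + 1) else 0)
  | _, _ => 0

/-- Bracket of `R_n`. -/
def brkR (n k : ℕ) (x y : LR n k) : LR n k :=
  ∑ i, ∑ j, (x i * y j) • cR n k i j

/-- Derived series of `R_n`: `D 0 = R_n`, `D (s+1) = [D s, D s]`. -/
def derR (n k : ℕ) : ℕ → Submodule ℂ (LR n k)
  | 0 => ⊤
  | s + 1 => Submodule.span ℂ
      {z | ∃ u ∈ derR n k s, ∃ v ∈ derR n k s, z = brkR n k u v}

/-- Explicit coordinate formula for the bracket. -/
def brkC (n k : ℕ) (hk : 1 ≤ k) (hn : k ≤ n) (x y : LR n k) : LR n k := fun t =>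
  match t with
  | .inl c =>
      x (.inl c) * (y (.inr (.inr ⟨k, by omega⟩)) +
        (if (c : ℕ) ≤ n - k then ((c : ℕ) : ℂ) * y (.inr (.inr ⟨0, by omega⟩))
          else y (.inr (.inr ⟨c - (n - k), by omega⟩))))
      + (if 1 ≤ (c : ℕ) ∧ (c : ℕ) ≤ n - k then
          x (.inl ⟨c - 1, by omega⟩) * y (.inr (.inl ⟨0, by omega⟩)) else 0)
      + (if n - k < (c : ℕ) then
          x (.inl ⟨0, by omega⟩) * y (.inr (.inl ⟨c - (n - k), by omega⟩)) else 0)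
  | .inr (.inl c) =>
      x (.inr (.inl c)) * y (.inr (.inr c.castSucc))
        - x (.inr (.inr c.castSucc)) * y (.inr (.inl c))
  | .inr (.inr _) => 0

def brkRLin (n k : ℕ) : LR n k →ₗ[ℂ] LR n k →ₗ[ℂ] LR n k :=
  LinearMap.mk₂ ℂ (brkR n k)
    (by intro a b c; simp [brkR, add_mul, add_smul, Finset.sum_add_distrib])
    (by intro a b c; simp [brkR, mul_assoc, mul_smul, Finset.smul_sum])
    (by intro a b c; simp [brkR, mul_add, add_smul, Finset.sum_add_distrib])
    (by intro a b c; simp [brkR, mul_left_comm _ a, mul_smul, Finset.smul_sum, smul_comm _ a])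

def brkCLin (n k : ℕ) (hk : 1 ≤ k) (hn : k ≤ n) : LR n k →ₗ[ℂ] LR n k →ₗ[ℂ] LR n k :=
  LinearMap.mk₂ ℂ (brkC n k hk hn)
    (by intro a b c; ext (t | t | t) <;> simp [brkC] <;> (try split_ifs) <;> ring)
    (by intro a b c; ext (t | t | t) <;> simp [brkC] <;> (try split_ifs) <;> ring)
    (by intro a b c; ext (t | t | t) <;> simp [brkC] <;> (try split_ifs) <;> ring)
    (by intro a b c; ext (t | t | t) <;> simp [brkC] <;> (try split_ifs) <;> ring)

lemma brkR_single (n k : ℕ) (i j) :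
    brkR n k (Pi.single i 1) (Pi.single j 1) = cR n k i j := by
  simp only [brkR]
  rw [Finset.sum_eq_single i, Finset.sum_eq_single j]
  · simp
  · intro b _ hb; simp [hb]
  · simp
  · intro b _ hb; simp [hb]
  · simp

lemma cR_eq (n k : ℕ) (hk : 1 ≤ k) (hn : 2 * k + 2 ≤ n) (i j) :
    cR n k i j = brkC n k hk (by omega) (Pi.single i 1) (Pi.single j 1) := by
  ext t
  rcases i with ⟨i, hi⟩ | ⟨i, hi⟩ | ⟨i, hi⟩ <;> rcases j with ⟨j, hj⟩ | ⟨j, hj⟩ | ⟨j, hj⟩ <;>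
    rcases t with ⟨t, ht⟩ | ⟨t, ht⟩ | ⟨t, ht⟩ <;>
    simp [cR, brkC, Pi.single_apply, Eb, Fb, ite_apply] <;> grind

lemma brkR_eq (n k : ℕ) (hk : 1 ≤ k) (hn : 2 * k + 2 ≤ n) (x y : LR n k) :
    brkR n k x y = brkC n k hk (by omega) x y := by
  have h : brkRLin n k = brkCLin n k hk (by omega) := by
    refine LinearMap.pi_ext' fun i => LinearMap.ext_ring ?_
    refine LinearMap.pi_ext' fun j => LinearMap.ext_ring ?_
    exact (brkR_single n k i j).trans (cR_eq n k hk hn i j)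
  exact congrArg (fun f => f x y) h

/-- `R_n` is a solvable Leibniz algebra: it satisfies the Leibniz identity and
its derived series reaches zero. -/
theorem Rn_solvable_Leibniz (n k : ℕ) (hk : 1 ≤ k) (hn : 2 * k + 2 ≤ n) :
    (∀ x y z : LR n k,
      brkR n k x (brkR n k y z)
        = brkR n k (brkR n k x y) z - brkR n k (brkR n k x z) y) ∧
    (∃ m : ℕ, derR n k m = ⊥) := by
  refine ⟨fun x y z => ?_, 3, ?_⟩
  · simp only [brkR_eq n k hk hn]
    ext (⟨t, ht⟩ | t | t)
    · by_cases h0 : t = 0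
      · subst h0
        simp [brkC]; ring
      by_cases h1 : t ≤ n - k
      · have e1 : 1 ≤ t := by omega
        have e2 : t - 1 ≤ n - k := by omega
        have e3 : ¬ (n - k < t) := by omega
        have e4 : ¬ (n - k < t - 1) := by omega
        obtain ⟨s, rfl⟩ : ∃ s, t = s + 1 := ⟨t - 1, by omega⟩
        simp only [Nat.add_sub_cancel] at e2 e4
        by_cases h5 : 1 ≤ s
        · simp [brkC, h1, e1, e2, e3, e4, h5]; ring
        · simp [brkC, h1, e1, e2, e3, e4, h5]; ring
      · have e3 : n - k < t := by omega
        simp [brkC, h1, e3]; ring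
    · simp [brkC]; ring
    · simp [brkC]
  · have d1 : ∀ u ∈ derR n k 1, ∀ c, u (.inr (.inr c)) = 0 := by
      intro u hu c
      refine Submodule.span_induction (p := fun u _ => u (.inr (.inr c)) = 0) ?_ ?_ ?_ ?_ hu
      · rintro _ ⟨u, _, v, _, rfl⟩
        simp [brkR_eq n k hk hn, brkC]
      · simp
      · intro _ _ _ _ h h'; simp [h, h']
      · intro _ _ _ h; simp [h]
    have d2 : ∀ u ∈ derR n k 2, ∀ c, u (.inr c) = 0 := by
      intro u hu c
      refine Submodule.span_induction (p := fun u _ => u (.inr c) = 0) ?_ ?_ ?_ ?_ hu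
      · rintro _ ⟨u, hu, v, hv, rfl⟩
        rcases c with c | c <;> simp [brkR_eq n k hk hn, brkC, d1 u hu, d1 v hv]
      · simp
      · intro _ _ _ _ h h'; simp [h, h']
      · intro _ _ _ h; simp [h]
    rw [derR, Submodule.span_eq_bot]
    rintro _ ⟨u, hu, v, hv, rfl⟩
    rw [brkR_eq n k hk hn]
    ext (t | t | t) <;> simp [brkC, d2 u hu, d2 v hv]

end
end

section
/- Every derivation d of the solvable Leibniz algebra R_n has the form: d(e₁) = a e₁ - c₁ e₂ - Σ_{i=2}^{k} cᵢ e_{n-k+i}; d(eᵢ) = (a + (i-1)b₁) eᵢ - c₁ e_{i+1} for 2 ≤ i ≤ n-k; d(e_{n-k+1}) = (a + (n-k)b₁) e_{n-k+1}; d(e_{n-k+i}) = (a + bᵢ) e_{n-k+i} for 2 ≤ i ≤ k; d(fᵢ) = bᵢ fᵢ; d(yᵢ) = cᵢ fᵢ for 1 ≤ i ≤ k, and d(y_{k+1}) = 0, for some scalars a, b₁,…,b_k, c₁,…,c_k. -/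
noncomputable section

open Finset

/-- Extended coordinates, 0-indexed by naturals. -/
def ext0 {m : ℕ} (y : Fin m → ℂ) (j : ℕ) : ℂ := if h : j < m then y ⟨j, h⟩ else 0

def ce {n k : ℕ} (x : LR n k) (j : ℕ) : ℂ := ext0 (fun a => x (.inl a)) j
def cf {n k : ℕ} (x : LR n k) (j : ℕ) : ℂ := ext0 (fun a => x (.inr (.inl a))) j
def cy {n k : ℕ} (x : LR n k) (j : ℕ) : ℂ := ext0 (fun a => x (.inr (.inr a))) j

lemma sum_ext0 {m : ℕ} (y : Fin m → ℂ) (j : ℕ) :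
    ∑ b : Fin m, y b * (if (b : ℕ) = j then 1 else 0) = ext0 y j := by
  unfold ext0
  split_ifs with h
  · rw [Finset.sum_eq_single (⟨j, h⟩ : Fin m)]
    · simp
    · intro b _ hb
      have : (b : ℕ) ≠ j := fun e => hb (Fin.ext e)
      simp [this]
    · simp
  · apply Finset.sum_eq_zero
    intro b _
    have : (b : ℕ) ≠ j := by have := b.2; omega
    simp [this]

lemma LR_ext {n k : ℕ} {x y : LR n k} (h1 : ∀ s, s < n → ce x s = ce y s)
    (h2 : ∀ s, s < k → cf x s = cf y s) (h3 : ∀ s, s < k + 1 → cy x s = cy y s) : x = y := by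
  funext s
  rcases s with a | a | a
  · simpa [ce, ext0] using h1 a a.2
  · simpa [cf, ext0] using h2 a a.2
  · have := h3 a a.2
    simp only [cy, ext0, a.2, dif_pos] at this
    exact this

lemma brk_apply {n k : ℕ} (x y : LR n k) (t) :
    brkR n k x y t = ∑ i, ∑ j, x i * y j * cR n k i j t := by
  simp only [brkR, Finset.sum_apply, Pi.smul_apply, smul_eq_mul]

lemma cR_ey {n k : ℕ} (hkn : k ≤ n) (a : Fin n) (b : Fin (k + 1)) (s : Fin n) :
    cR n k (.inl a) (.inr (.inr b)) (.inl s) =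
      (if (a : ℕ) = s then 1 else 0) * ((if (b : ℕ) = k then 1 else 0)
        + (if (s : ℕ) ≤ n - k then (s : ℂ) else 0) * (if (b : ℕ) = 0 then 1 else 0)
        + (if n - k + 1 ≤ (s : ℕ) then 1 else 0) * (if (b : ℕ) = s - (n - k) then 1 else 0)) := by
  have := a.2
  have := b.2
  have := s.2
  by_cases has : (a : ℕ) = s
  · have h3 : (1 ≤ (b : ℕ) ∧ (b : ℕ) + 1 ≤ k ∧ (s : ℕ) + 1 = n - k + (b : ℕ) + 1) ↔
        (n - k + 1 ≤ (s : ℕ) ∧ (b : ℕ) = s - (n - k)) := by omega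
    have h2 : ((b : ℕ) = 0 ∧ (s : ℕ) + 1 ≤ n - k + 1) ↔ ((s : ℕ) ≤ n - k ∧ (b : ℕ) = 0) := by omega
    simp only [cR, has, h3, h2, Pi.add_apply, ite_and]
    split_ifs <;> simp [Eb]
  · have has' : ¬ (s : ℕ) = a := fun h => has h.symm
    simp only [cR, Pi.add_apply]
    split_ifs <;> simp [Eb, has']

lemma cR_ef {n k : ℕ} (hkn : k ≤ n) (a : Fin n) (b : Fin k) (s : Fin n) :
    cR n k (.inl a) (.inr (.inl b)) (.inl s) =
      (if 1 ≤ (s : ℕ) ∧ (s : ℕ) ≤ n - k then 1 else 0) *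
          ((if (a : ℕ) = s - 1 then 1 else 0) * (if (b : ℕ) = 0 then 1 else 0))
      + (if n - k + 1 ≤ (s : ℕ) then 1 else 0) *
          ((if (a : ℕ) = 0 then 1 else 0) * (if (b : ℕ) = s - (n - k) then 1 else 0)) := by
  have := a.2
  have := b.2
  have := s.2
  simp only [cR, Pi.add_apply]
  congr 1
  · split_ifs <;> simp [Eb] <;> omega
  · split_ifs <;> simp [Eb] <;> omega

lemma brk_e {n k : ℕ} (hkn : k ≤ n) (x y : LR n k) (s : ℕ) (hs : s < n) :
    ce (brkR n k x y) s =
      ce x s * (cy y k + (if s ≤ n - k then (s : ℂ) else 0) * cy y 0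
        + (if n - k + 1 ≤ s then 1 else 0) * cy y (s - (n - k)))
      + (if 1 ≤ s ∧ s ≤ n - k then 1 else 0) * (ce x (s - 1) * cf y 0)
      + (if n - k + 1 ≤ s then 1 else 0) * (ce x 0 * cf y (s - (n - k))) := by
  have h0 : ce (brkR n k x y) s = brkR n k x y (.inl ⟨s, hs⟩) := by simp [ce, ext0, hs]
  rw [h0]
  simp only [brk_apply, Fintype.sum_sum_type,
    cR_ey hkn, cR_ef hkn]
  simp only [cR, Pi.zero_apply, mul_zero, Finset.sum_const_zero, zero_add, add_zero]
  have z1 : ∀ (a : Fin k) (b : Fin (k+1)), (if (a : ℕ) = (b : ℕ) then Fb n k ((a : ℕ) + 1) else 0)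
      (Sum.inl ⟨s, hs⟩) = 0 := by
    intro a b; split_ifs <;> simp [Fb]
  have z2 : ∀ (a : Fin (k+1)) (b : Fin k), (if (a : ℕ) = (b : ℕ) then -Fb n k ((b : ℕ) + 1) else 0)
      (Sum.inl ⟨s, hs⟩) = 0 := by
    intro a b; split_ifs <;> simp [Fb]
  simp only [z1, z2, mul_zero, Finset.sum_const_zero, add_zero]
  unfold ce cf cy
  simp only [← sum_ext0]
  simp only [mul_add, add_mul, Finset.sum_add_distrib, Finset.mul_sum, Finset.sum_mul]
  have e1 : ∀ a b c d e : ℂ, a = d → b = e → a + b + c = d + e + c := by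
    intro a b c d e h1 h2; rw [h1, h2]
  rw [add_comm, ← add_assoc]
  congr 1
  · congr 1
    congr 1
    · congr 1
      · rw [Finset.sum_comm]
        refine Finset.sum_congr rfl fun a _ => Finset.sum_congr rfl fun b _ => ?_
        ring
      · rw [Finset.sum_comm]
        refine Finset.sum_congr rfl fun a _ => Finset.sum_congr rfl fun b _ => ?_
        ring
    · rw [Finset.sum_comm]
      refine Finset.sum_congr rfl fun a _ => Finset.sum_congr rfl fun b _ => ?_
      ring
    · rw [Finset.sum_comm]
      refine Finset.sum_congr rfl fun a _ => Finset.sum_congr rfl fun b _ => ?_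
      ring
  · rw [Finset.sum_comm]
    refine Finset.sum_congr rfl fun a _ => Finset.sum_congr rfl fun b _ => ?_
    ring

lemma brk_f {n k : ℕ} (x y : LR n k) (s : ℕ) (hs : s < k) :
    cf (brkR n k x y) s = cf x s * cy y s - cy x s * cf y s := by
  have h0 : cf (brkR n k x y) s = brkR n k x y (.inr (.inl ⟨s, hs⟩)) := by simp [cf, ext0, hs]
  rw [h0]
  have a1 : ∀ a b, cR n k (.inl a) b (.inr (.inl ⟨s, hs⟩)) = 0 := by
    intro a b
    rcases b with b | b | b <;> simp only [cR, Pi.add_apply, Pi.zero_apply] <;> split_ifs <;> simp [Eb]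
  have a2 : ∀ a b, cR n k (.inr (.inl a)) (.inr (.inr b)) (.inr (.inl ⟨s, hs⟩)) =
      (if (a : ℕ) = s then 1 else 0) * (if (b : ℕ) = s then 1 else 0) := by
    intro a b
    simp only [cR]; split_ifs <;> simp [Fb] <;> omega
  have a3 : ∀ a b, cR n k (.inr (.inr a)) (.inr (.inl b)) (.inr (.inl ⟨s, hs⟩)) =
      - ((if (a : ℕ) = s then 1 else 0) * (if (b : ℕ) = s then 1 else 0)) := by
    intro a b
    simp only [cR]; split_ifs <;> simp [Fb] <;> omega
  simp only [brk_apply, Fintype.sum_sum_type, a1, a2, a3]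
  simp only [cR, Pi.zero_apply, mul_zero, Finset.sum_const_zero, zero_add, add_zero]
  unfold cf cy
  simp only [← sum_ext0, Finset.sum_mul_sum, sub_eq_add_neg, ← Finset.sum_neg_distrib]
  congr 1 <;>
  · refine Finset.sum_congr rfl fun a _ => Finset.sum_congr rfl fun b _ => ?_
    ring

lemma brk_y {n k : ℕ} (x y : LR n k) (s : ℕ) : cy (brkR n k x y) s = 0 := by
  unfold cy ext0
  split_ifs with hs
  · have a1 : ∀ a b, cR n k a b (.inr (.inr ⟨s, hs⟩)) = 0 := by
      intro a b
      rcases a with a | a | a <;> rcases b with b | b | b <;>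
        simp only [cR, Pi.add_apply, Pi.zero_apply] <;> split_ifs <;> simp [Eb, Fb]
    simp [brkR, a1]
  · rfl

section coords
variable {n k : ℕ}

lemma ce_E (i s : ℕ) : ce (Eb n k i) s = if s + 1 = i ∧ s < n then 1 else 0 := by
  unfold ce ext0; split_ifs <;> simp [Eb] <;> omega
lemma cf_E (i s : ℕ) : cf (Eb n k i) s = 0 := by
  unfold cf ext0; split_ifs <;> simp [Eb]
lemma cy_E (i s : ℕ) : cy (Eb n k i) s = 0 := by
  unfold cy ext0; split_ifs <;> simp [Eb]
lemma ce_F (i s : ℕ) : ce (Fb n k i) s = 0 := by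
  unfold ce ext0; split_ifs <;> simp [Fb]
lemma cf_F (i s : ℕ) : cf (Fb n k i) s = if s + 1 = i ∧ s < k then 1 else 0 := by
  unfold cf ext0; split_ifs <;> simp [Fb] <;> omega
lemma cy_F (i s : ℕ) : cy (Fb n k i) s = 0 := by
  unfold cy ext0; split_ifs <;> simp [Fb]
lemma ce_Y (i s : ℕ) : ce (Yb n k i) s = 0 := by
  unfold ce ext0; split_ifs <;> simp [Yb]
lemma cf_Y (i s : ℕ) : cf (Yb n k i) s = 0 := by
  unfold cf ext0; split_ifs <;> simp [Yb]
lemma cy_Y (i s : ℕ) : cy (Yb n k i) s = if s + 1 = i ∧ s < k + 1 then 1 else 0 := by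
  unfold cy ext0; split_ifs <;> simp [Yb] <;> omega

lemma ce_add (x y : LR n k) (s : ℕ) : ce (x + y) s = ce x s + ce y s := by
  unfold ce ext0; split_ifs <;> simp
lemma cf_add (x y : LR n k) (s : ℕ) : cf (x + y) s = cf x s + cf y s := by
  unfold cf ext0; split_ifs <;> simp
lemma cy_add (x y : LR n k) (s : ℕ) : cy (x + y) s = cy x s + cy y s := by
  unfold cy ext0; split_ifs <;> simp
lemma ce_sub (x y : LR n k) (s : ℕ) : ce (x - y) s = ce x s - ce y s := by
  unfold ce ext0; split_ifs <;> simp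
lemma cf_sub (x y : LR n k) (s : ℕ) : cf (x - y) s = cf x s - cf y s := by
  unfold cf ext0; split_ifs <;> simp
lemma cy_sub (x y : LR n k) (s : ℕ) : cy (x - y) s = cy x s - cy y s := by
  unfold cy ext0; split_ifs <;> simp
lemma ce_smul (c : ℂ) (x : LR n k) (s : ℕ) : ce (c • x) s = c * ce x s := by
  unfold ce ext0; split_ifs <;> simp
lemma cf_smul (c : ℂ) (x : LR n k) (s : ℕ) : cf (c • x) s = c * cf x s := by
  unfold cf ext0; split_ifs <;> simp
lemma cy_smul (c : ℂ) (x : LR n k) (s : ℕ) : cy (c • x) s = c * cy x s := by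
  unfold cy ext0; split_ifs <;> simp
lemma ce_zero (s : ℕ) : ce (0 : LR n k) s = 0 := by
  unfold ce ext0; split_ifs <;> simp
lemma cf_zero (s : ℕ) : cf (0 : LR n k) s = 0 := by
  unfold cf ext0; split_ifs <;> simp
lemma cy_zero (s : ℕ) : cy (0 : LR n k) s = 0 := by
  unfold cy ext0; split_ifs <;> simp
lemma ce_sum (t : Finset ℕ) (g : ℕ → LR n k) (s : ℕ) : ce (∑ i ∈ t, g i) s = ∑ i ∈ t, ce (g i) s := by
  unfold ce ext0; split_ifs <;> simp
lemma cf_sum (t : Finset ℕ) (g : ℕ → LR n k) (s : ℕ) : cf (∑ i ∈ t, g i) s = ∑ i ∈ t, cf (g i) s := by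
  unfold cf ext0; split_ifs <;> simp
lemma cy_sum (t : Finset ℕ) (g : ℕ → LR n k) (s : ℕ) : cy (∑ i ∈ t, g i) s = ∑ i ∈ t, cy (g i) s := by
  unfold cy ext0; split_ifs <;> simp

/-- Brackets of basis vectors -/
lemma brk_EYlast (hkn : k ≤ n) (hk : 1 ≤ k) (i : ℕ) :
    brkR n k (Eb n k i) (Yb n k (k + 1)) = Eb n k i := by
  apply LR_ext <;> intro s hs
  · rw [brk_e hkn _ _ _ hs]; simp only [ce_E, cy_Y, cf_Y, mul_zero, add_zero, true_and]
    split_ifs <;> first | (exfalso; omega) | simp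
  · rw [brk_f _ _ _ hs]; simp [cf_E, cy_E]
  · rw [brk_y]; simp [cy_E]

lemma brk_E1Y (hkn : k < n) (i : ℕ) (h1 : 1 ≤ i) (hi : i ≤ k) :
    brkR n k (Eb n k 1) (Yb n k i) = 0 := by
  apply LR_ext <;> intro s hs
  · rw [brk_e hkn.le _ _ _ hs]; simp only [ce_E, cy_Y, cf_Y, mul_zero, add_zero, ce_zero]
    rcases Nat.eq_zero_or_pos s with h | h
    · subst h; 
      have : ¬ (k + 1 = i) := by omega
      simp [this]
    · have : ¬ s = 0 := by omega
      simp [this]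
  · rw [brk_f _ _ _ hs]; simp [cf_E, cy_E, cf_zero]
  · rw [brk_y]; simp [cy_zero]

lemma brk_FY (hkn : k ≤ n) (i j : ℕ) :
    brkR n k (Fb n k i) (Yb n k j) = if i = j then Fb n k i else 0 := by
  apply LR_ext <;> intro s hs
  · rw [brk_e hkn _ _ _ hs]; split_ifs <;> simp [ce_F, cy_Y, cf_Y, ce_zero]
  · rw [brk_f _ _ _ hs]; split_ifs <;> simp [cf_F, cf_Y, cf_zero, cy_F, cy_Y, hs] <;> omega
  · rw [brk_y]; split_ifs <;> simp [cy_zero, cy_F]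

lemma brk_YY (hkn : k ≤ n) (i j : ℕ) : brkR n k (Yb n k i) (Yb n k j) = 0 := by
  apply LR_ext <;> intro s hs
  · rw [brk_e hkn _ _ _ hs]; simp [ce_Y, cf_Y, ce_zero]
  · rw [brk_f _ _ _ hs]; simp [cf_Y, cf_zero]
  · rw [brk_y]; simp [cy_zero]

lemma brk_EF1 (hkn : k ≤ n) (hk : 1 ≤ k) (i : ℕ) (h1 : 1 ≤ i) (hi : i ≤ n - k) :
    brkR n k (Eb n k i) (Fb n k 1) = Eb n k (i + 1) := by
  apply LR_ext <;> intro s hs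
  · rw [brk_e hkn _ _ _ hs]
    simp only [ce_E, cy_F, cf_F, true_and]
    split_ifs <;> first | (exfalso; omega) | simp
  · rw [brk_f _ _ _ hs]; simp [cf_E, cy_E, cy_F]
  · rw [brk_y]; simp [cy_E]

lemma brk_E1F (hkn : k < n) (i : ℕ) (h1 : 2 ≤ i) (hi : i ≤ k) :
    brkR n k (Eb n k 1) (Fb n k i) = Eb n k (n - k + i) := by
  apply LR_ext <;> intro s hs
  · rw [brk_e hkn.le _ _ _ hs]
    simp only [ce_E, cy_F, cf_F, true_and]
    split_ifs <;> first | (exfalso; omega) | simp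
  · rw [brk_f _ _ _ hs]; simp [cf_E, cy_E, cy_F]
  · rw [brk_y]; simp [cy_E]

lemma brk_F1_e (hkn : k ≤ n) (hk : 1 ≤ k) (x : LR n k) (s : ℕ) (hs : s < n) :
    ce (brkR n k x (Fb n k 1)) s = if 1 ≤ s ∧ s ≤ n - k then ce x (s - 1) else 0 := by
  rw [brk_e hkn _ _ _ hs]
  simp only [cy_F, cf_F, true_and]
  rw [if_pos (by omega : 0 < k)]
  by_cases h : n - k + 1 ≤ s
  · rw [if_neg (by omega : ¬ (1 ≤ s ∧ s ≤ n - k)),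
      if_neg (by omega : ¬ (s - (n - k) + 1 = 1 ∧ s - (n - k) < k)),
      if_neg (by omega : ¬ (1 ≤ s ∧ s ≤ n - k))]
    ring
  · rw [if_neg h]
    split_ifs <;> ring

end coords

set_option maxHeartbeats 2000000 in
/-- Every derivation `d` of the solvable Leibniz algebra `R_n` has the form
`d(e₁) = a e₁ - c₁ e₂ - Σ_{i=2}^{k} cᵢ e_{n-k+i}`,
`d(eᵢ) = (a + (i-1)b₁) eᵢ - c₁ e_{i+1}` (2 ≤ i ≤ n-k),
`d(e_{n-k+1}) = (a + (n-k)b₁) e_{n-k+1}`,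
`d(e_{n-k+i}) = (a + bᵢ) e_{n-k+i}` (2 ≤ i ≤ k),
`d(fᵢ) = bᵢ fᵢ`, `d(yᵢ) = cᵢ fᵢ` (1 ≤ i ≤ k), `d(y_{k+1}) = 0`. -/
theorem derivations_of_Rn (n k : ℕ) (hk : 1 ≤ k) (hn : 2 * k + 2 ≤ n)
    (d : LR n k →ₗ[ℂ] LR n k)
    (hd : ∀ u v : LR n k, d (brkR n k u v) = brkR n k (d u) v + brkR n k u (d v)) :
    ∃ (a : ℂ) (b c : ℕ → ℂ),
      d (Eb n k 1) = a • Eb n k 1 - c 1 • Eb n k 2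
          - ∑ i ∈ Finset.Icc 2 k, c i • Eb n k (n - k + i) ∧
      (∀ i : ℕ, 2 ≤ i → i ≤ n - k →
        d (Eb n k i) = (a + ((i : ℂ) - 1) * b 1) • Eb n k i - c 1 • Eb n k (i + 1)) ∧
      d (Eb n k (n - k + 1)) = (a + ((n - k : ℕ) : ℂ) * b 1) • Eb n k (n - k + 1) ∧
      (∀ i : ℕ, 2 ≤ i → i ≤ k →
        d (Eb n k (n - k + i)) = (a + b i) • Eb n k (n - k + i)) ∧
      (∀ i : ℕ, 1 ≤ i → i ≤ k → d (Fb n k i) = b i • Fb n k i) ∧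
      (∀ i : ℕ, 1 ≤ i → i ≤ k → d (Yb n k i) = c i • Fb n k i) ∧
      d (Yb n k (k + 1)) = 0 := by
  have hkn : k ≤ n := by omega
  have hkn' : k < n := by omega
  -- no `y`-components outside of `d(y)`
  have hEy : ∀ i s, cy (d (Eb n k i)) s = 0 := by
    intro i s
    have h := hd (Eb n k i) (Yb n k (k + 1))
    rw [brk_EYlast hkn hk] at h
    rw [h, cy_add, brk_y, brk_y, add_zero]
  have hFy : ∀ i s, cy (d (Fb n k i)) s = 0 := by
    intro i s
    have h := hd (Fb n k i) (Yb n k i)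
    rw [brk_FY hkn, if_pos rfl] at h
    rw [h, cy_add, brk_y, brk_y, add_zero]
  -- products of the `y`
  have hYY : ∀ i j, brkR n k (d (Yb n k i)) (Yb n k j) + brkR n k (Yb n k i) (d (Yb n k j)) = 0 := by
    intro i j
    rw [← hd, brk_YY hkn, map_zero]
  have hYe : ∀ i s, s < n → ce (d (Yb n k i)) s = 0 := by
    intro i s hs
    have h := congrArg (fun x => ce x s) (hYY i (k + 1))
    simp only [ce_add, brk_e hkn _ _ _ hs, ce_zero, ce_Y, cf_Y, cy_Y, true_and, mul_zero, zero_mul,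
      add_zero] at h
    rw [if_pos (by omega), if_neg (by omega : ¬ (0 + 1 = k + 1 ∧ 0 < k + 1)),
      if_neg (by omega : ¬ (s - (n - k) + 1 = k + 1 ∧ s - (n - k) < k + 1))] at h
    simpa using h
  have hYf : ∀ i s, s < k → s + 1 ≠ i → cf (d (Yb n k i)) s = 0 := by
    intro i s hs hi
    have h := congrArg (fun x => cf x s) (hYY i (s + 1))
    simp only [cf_add, brk_f _ _ _ hs, cf_zero, cf_Y, cy_Y, true_and] at h
    rw [if_pos (by omega : s < k + 1), if_neg (by omega : ¬ (s + 1 = i ∧ s < k + 1))] at h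
    simpa using h
  -- products `[f_i, y_j]`
  have hFY : ∀ i j, brkR n k (d (Fb n k i)) (Yb n k j) + brkR n k (Fb n k i) (d (Yb n k j))
      = if i = j then d (Fb n k i) else 0 := by
    intro i j
    rw [← hd, brk_FY hkn]
    split_ifs <;> simp
  have hFe : ∀ i s, i ≤ k → s < n → ce (d (Fb n k i)) s = 0 := by
    intro i s hi hs
    have h := congrArg (fun x => ce x s) (hFY i (k + 1))
    rw [if_neg (by omega)] at h
    simp only [ce_add, brk_e hkn _ _ _ hs, ce_zero, ce_F, cf_Y, cy_Y, true_and, mul_zero, zero_mul,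
      add_zero] at h
    rw [if_pos (by omega), if_neg (by omega : ¬ (0 + 1 = k + 1 ∧ 0 < k + 1)),
      if_neg (by omega : ¬ (s - (n - k) + 1 = k + 1 ∧ s - (n - k) < k + 1))] at h
    simpa using h
  have hFf : ∀ i s, s < k → s + 1 ≠ i → cf (d (Fb n k i)) s = 0 := by
    intro i s hs hi
    have h := congrArg (fun x => cf x s) (hFY i i)
    rw [if_pos rfl] at h
    simp only [cf_add, brk_f _ _ _ hs, cf_Y, cy_Y, cf_F, cy_F] at h
    rw [if_neg (by omega), if_neg (by omega)] at h
    simpa using h.symm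
  have hYy : ∀ j s, s < k → cy (d (Yb n k j)) s = 0 := by
    intro j s hs
    have h := congrArg (fun x => cf x s) (hFY (s + 1) j)
    simp only [cf_add, brk_f _ _ _ hs, cf_Y, cy_Y, cf_F, cy_F, true_and] at h
    rw [if_pos hs] at h
    by_cases hj : s + 1 = j
    · rw [if_pos (by omega : s + 1 = j ∧ s < k + 1), if_pos hj] at h
      simpa using h
    · rw [if_neg (by omega : ¬ (s + 1 = j ∧ s < k + 1)), if_neg hj] at h
      simpa [cf_zero] using h
  -- products `[e_1, y_j]`
  have hEYl : brkR n k (d (Eb n k 1)) (Yb n k (k + 1)) + brkR n k (Eb n k 1) (d (Yb n k (k + 1)))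
      = d (Eb n k 1) := by
    rw [← hd, brk_EYlast hkn hk]
  have hEY : ∀ j, 1 ≤ j → j ≤ k →
      brkR n k (d (Eb n k 1)) (Yb n k j) + brkR n k (Eb n k 1) (d (Yb n k j)) = 0 := by
    intro j h1 h2
    rw [← hd, brk_E1Y hkn' j h1 h2, map_zero]
  have h0n : 0 < n := by omega
  have hYk : ∀ j, 1 ≤ j → j ≤ k + 1 → cy (d (Yb n k j)) k = 0 := by
    intro j h1 h2
    by_cases hj : j = k + 1
    · subst hj
      have h := congrArg (fun x => ce x 0) hEYl
      simp only [ce_add, brk_e hkn _ _ _ h0n, ce_E, cf_Y, cy_Y, hYy _ 0 hk] at h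
      rw [if_neg (by omega : ¬ (n - k + 1 ≤ 0))] at h
      simpa [h0n] using h
    · have h := congrArg (fun x => ce x 0) (hEY j h1 (by omega))
      simp only [ce_add, brk_e hkn _ _ _ h0n, ce_E, cf_Y, cy_Y, hYy _ 0 hk] at h
      rw [if_neg (by omega : ¬ (n - k + 1 ≤ 0)), if_neg (by omega : ¬ (k + 1 = j ∧ k < k + 1))] at h
      simpa [h0n, ce_zero] using h
  have hY0 : ∀ j, 1 ≤ j → j ≤ k + 1 → ∀ s, s < k + 1 → cy (d (Yb n k j)) s = 0 := by
    intro j h1 h2 s hs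
    by_cases h : s = k
    · subst h; exact hYk j h1 h2
    · exact hYy j s (by omega)
  have hE1f : ∀ s, s < k → cf (d (Eb n k 1)) s = 0 := by
    intro s hs
    have h := congrArg (fun x => cf x s) hEYl
    simp only [cf_add, brk_f _ _ _ hs, cf_E, cy_E, cf_Y, cy_Y] at h
    rw [if_neg (by omega)] at h
    simpa using h.symm
  -- the scalars
  obtain ⟨c, hc⟩ : ∃ c : ℕ → ℂ, ∀ i, c i = cf (d (Yb n k i)) (i - 1) := ⟨_, fun _ => rfl⟩
  obtain ⟨b, hb⟩ : ∃ b : ℕ → ℂ, ∀ i, b i = cf (d (Fb n k i)) (i - 1) := ⟨_, fun _ => rfl⟩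
  obtain ⟨a, ha⟩ : ∃ a : ℂ, a = ce (d (Eb n k 1)) 0 := ⟨_, rfl⟩
  have hF : ∀ i : ℕ, 1 ≤ i → i ≤ k → d (Fb n k i) = b i • Fb n k i := by
    intro i h1 h2
    apply LR_ext <;> intro s hs
    · rw [hFe i s h2 hs, ce_smul, ce_F, mul_zero]
    · rw [cf_smul, cf_F]
      by_cases h : s + 1 = i
      · subst h; simp [hb, hs]
      · rw [hFf i s hs h, if_neg (by omega), mul_zero]
    · rw [hFy, cy_smul, cy_F, mul_zero]
  have hY : ∀ i : ℕ, 1 ≤ i → i ≤ k → d (Yb n k i) = c i • Fb n k i := by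
    intro i h1 h2
    apply LR_ext <;> intro s hs
    · rw [hYe i s hs, ce_smul, ce_F, mul_zero]
    · rw [cf_smul, cf_F]
      by_cases h : s + 1 = i
      · subst h; simp [hc, hs]
      · rw [hYf i s hs h, if_neg (by omega), mul_zero]
    · rw [hY0 i h1 (by omega) s hs, cy_smul, cy_F, mul_zero]
  have hYl : d (Yb n k (k + 1)) = 0 := by
    apply LR_ext <;> intro s hs
    · rw [hYe _ s hs, ce_zero]
    · rw [hYf _ s hs (by omega), cf_zero]
    · rw [hY0 _ (by omega) (by omega) s hs, cy_zero]
  have hE1 : d (Eb n k 1) = a • Eb n k 1 - c 1 • Eb n k 2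
          - ∑ i ∈ Finset.Icc 2 k, c i • Eb n k (n - k + i) := by
    apply LR_ext <;> intro s hs
    · simp only [ce_sub, ce_sum, ce_smul, ce_E]
      by_cases h0 : s = 0
      · subst h0
        rw [if_pos (by omega), if_neg (by omega), Finset.sum_eq_zero, ha]
        · ring
        · intro i hi
          rw [Finset.mem_Icc] at hi
          rw [if_neg (by omega), mul_zero]
      rw [if_neg (by omega : ¬ (s + 1 = 1 ∧ s < n))]
      by_cases hs2 : s ≤ n - k
      · have h := congrArg (fun x => ce x s) (hEY 1 le_rfl hk)
        rw [hY 1 le_rfl hk] at h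
        simp only [ce_add, brk_e hkn _ _ _ hs, ce_E, cf_Y, cy_Y, cf_smul, cy_smul, cf_F, cy_F,
          ce_zero] at h
        rw [if_neg (by omega : ¬ (k + 1 = 1 ∧ k < k + 1)), if_pos hs2,
          if_neg (by omega : ¬ (n - k + 1 ≤ s)), if_pos (by omega : 1 ≤ s ∧ s ≤ n - k),
          if_neg (by omega : ¬ (s + 1 = 1 ∧ s < n))] at h
        rw [Finset.sum_eq_zero (by
          intro i hi
          rw [Finset.mem_Icc] at hi
          rw [if_neg (by omega), mul_zero])]
        by_cases h1 : s = 1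
        · subst h1
          rw [if_pos (by omega)]
          simp [h0n, show 0 < k from hk] at h
          linear_combination h
        · rw [if_neg (by omega)]
          rw [if_neg (by omega : ¬ (s - 1 + 1 = 1 ∧ s - 1 < n))] at h
          have hs0 : (s : ℂ) ≠ 0 := by exact_mod_cast h0
          simp [hs0] at h
          rw [h]; ring
      · obtain ⟨j, hj⟩ : ∃ j, j = s - (n - k) := ⟨_, rfl⟩
        have h := congrArg (fun x => ce x s) (hEY (j + 1) (by omega) (by omega))
        rw [hY (j + 1) (by omega) (by omega)] at h
        simp only [ce_add, brk_e hkn _ _ _ hs, ce_E, cf_Y, cy_Y, cf_smul, cy_smul, cf_F, cy_F,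
          ce_zero, ← hj, true_and] at h
        rw [if_neg (by omega : ¬ (k + 1 = j + 1 ∧ k < k + 1)), if_neg hs2,
          if_pos (by omega : (n - k + 1 ≤ s)), if_neg (by omega : ¬ (1 ≤ s ∧ s ≤ n - k)),
          if_neg (by omega : ¬ (s + 1 = 1 ∧ s < n)), if_pos (by omega : j < k + 1),
          if_pos (by omega : j < k), if_pos (by omega : 0 < n)] at h
        rw [if_neg (by omega), Finset.sum_eq_single (j + 1)]
        · rw [if_pos (by omega)]
          linear_combination h
        · intro i _ hi
          rw [if_neg (by omega), mul_zero]
        · intro hi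
          rw [Finset.mem_Icc] at hi
          omega
    · rw [hE1f s hs]; simp [cf_sub, cf_sum, cf_smul, cf_E]
    · rw [hEy]; simp [cy_sub, cy_sum, cy_smul, cy_E]
  have hstep : ∀ i, 1 ≤ i → i ≤ n - k →
      d (Eb n k (i + 1)) = brkR n k (d (Eb n k i)) (Fb n k 1) + b 1 • Eb n k (i + 1) := by
    intro i h1 h2
    have h := hd (Eb n k i) (Fb n k 1)
    rw [brk_EF1 hkn hk i h1 h2, hF 1 le_rfl hk] at h
    rw [h]
    congr 1
    rw [← brk_EF1 hkn hk i h1 h2]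
    simp only [brkR, Finset.smul_sum, smul_smul, Pi.smul_apply, smul_eq_mul]
    refine Finset.sum_congr rfl fun _ _ => Finset.sum_congr rfl fun _ _ => ?_
    congr 1; ring
  have hE2 : d (Eb n k 2) = (a + b 1) • Eb n k 2 - c 1 • Eb n k 3 := by
    rw [hstep 1 le_rfl (by omega), hE1]
    apply LR_ext <;> intro s hs
    · rw [ce_add, brk_F1_e hkn hk _ _ hs]
      simp only [ce_sub, ce_sum, ce_smul, ce_E]
      by_cases hs2 : 1 ≤ s ∧ s ≤ n - k
      · rw [if_pos hs2, Finset.sum_eq_zero (s := Finset.Icc 2 k) (f := fun i =>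
          c i * if s - 1 + 1 = n - k + i ∧ s - 1 < n then 1 else 0) (by
            intro i hi
            rw [Finset.mem_Icc] at hi
            rw [if_neg (by omega), mul_zero])]
        split_ifs <;> first | (exfalso; omega) | ring
      · rw [if_neg hs2]
        split_ifs <;> first | (exfalso; omega) | ring
    · rw [cf_add, brk_f _ _ _ hs]; simp [cf_sub, cf_sum, cf_smul, cf_E, cy_sub, cy_sum, cy_smul, cy_E, cy_F]
    · rw [cy_add, brk_y]; simp [cy_sub, cy_sum, cy_smul, cy_E]
  have hEi : ∀ i : ℕ, 2 ≤ i → i ≤ n - k →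
        d (Eb n k i) = (a + ((i : ℂ) - 1) * b 1) • Eb n k i - c 1 • Eb n k (i + 1) := by
    intro i h1
    induction i, h1 using Nat.le_induction with
    | base => intro _; rw [hE2]; push_cast; congr 2; ring
    | succ i h1 ih =>
      intro h2
      rw [hstep i (by omega) (by omega), ih (by omega)]
      apply LR_ext <;> intro s hs
      · rw [ce_add, brk_F1_e hkn hk _ _ hs]
        simp only [ce_sub, ce_smul, ce_E]
        split_ifs <;> first | (exfalso; omega) | (push_cast; ring)
      · rw [cf_add, brk_f _ _ _ hs]; simp [cf_sub, cf_smul, cf_E, cy_sub, cy_smul, cy_E, cy_F]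
      · rw [cy_add, brk_y]; simp [cy_sub, cy_smul, cy_E]
  refine ⟨a, b, c, hE1, hEi, ?_, ?_, hF, hY, hYl⟩
  · rw [hstep (n - k) (by omega) le_rfl, hEi (n - k) (by omega) le_rfl]
    apply LR_ext <;> intro s hs
    · rw [ce_add, brk_F1_e hkn hk _ _ hs]
      simp only [ce_sub, ce_smul, ce_E]
      split_ifs <;> first | (exfalso; omega) | (push_cast; ring)
    · rw [cf_add, brk_f _ _ _ hs]; simp [cf_sub, cf_smul, cf_E, cy_sub, cy_smul, cy_E, cy_F]
    · rw [cy_add, brk_y]; simp [cy_sub, cy_smul, cy_E]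
  · intro i h1 h2
    have h := hd (Eb n k 1) (Fb n k i)
    rw [brk_E1F hkn' i h1 h2, hF i (by omega) h2] at h
    rw [h]
    apply LR_ext <;> intro s hs
    · rw [ce_add, brk_e hkn _ _ _ hs, brk_e hkn _ _ _ hs]
      simp only [ce_smul, ce_E, cf_F, cy_F, cf_smul, cy_smul, ← ha, true_and]
      split_ifs <;> first | (exfalso; omega) | (push_cast; ring)
    · rw [cf_add, brk_f _ _ _ hs, brk_f _ _ _ hs]; simp [cf_smul, cf_E, cy_smul, cy_E, cy_F, hEy]
    · rw [cy_add, brk_y, brk_y]; simp [cy_smul, cy_E]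

end
end
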